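/- There is a uniform constant C such that for every h ∈ C₀^∞(ℝ₊×ℝ³) and every t ≥ 0: ‖⟨t−r⟩ ∇_x ∂h(t,·)‖₂ ≤ C Σ_{|α|≤1} ‖Γ^α h'(t,·)‖₂ + C‖⟨t+r⟩ □h(t,·)‖₂, where ∇_x ∂h denotes the collection of all second derivatives ∂_j ∂_a h with 1 ≤ j ≤ 3 and 0 ≤ a ≤ 3. -/

import Mathlib

open MeasureTheory Real Finset

noncomputable section

/-- Points of space-time `ℝ×ℝ³`, written `X = (x₀,x₁,x₂,x₃)` with `x₀ = t`. -/
abbrev Pt : Type := Fin 4 → ℝ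
/-- Points of space `ℝ³`. -/
abbrev Sp : Type := Fin 3 → ℝ

/-- Space-time partial derivative `∂_a`. -/
def pd (a : Fin 4) (u : Pt → ℝ) : Pt → ℝ := fun X => fderiv ℝ u X (Pi.single a 1)

/-- Rotation field `Ω_{ij} = x_i ∂_j - x_j ∂_i` (space-time indices). -/
def rot (i j : Fin 4) (u : Pt → ℝ) : Pt → ℝ := fun X => X i * pd j u X - X j * pd i u X

/-- Scaling field `S = t ∂_t + x·∇_x = x^a ∂_a`. -/
def scal (u : Pt → ℝ) : Pt → ℝ := fun X => ∑ a, X a * pd a u X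

/-- The eight vector fields `Γ = (∂, Ω, S)`. -/
def Gam : Fin 8 → (Pt → ℝ) → Pt → ℝ :=
  ![pd 0, pd 1, pd 2, pd 3, rot 1 2, rot 1 3, rot 2 3, scal]

/-- `Γ^α` for a multi-index `α` (a word in the eight fields) of length `m`. -/
def GamComp : ∀ {m : ℕ}, (Fin m → Fin 8) → (Pt → ℝ) → Pt → ℝ
  | 0, _, u => u
  | _ + 1, α, u => Gam (α 0) (GamComp (fun i => α i.succ) u)

/-- Euclidean length `r = |x|` of a spatial point. -/
def rad (x : Sp) : ℝ := Real.sqrt (∑ i, (x i) ^ 2)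

/-- Japanese bracket `⟨z⟩ = (1+z²)^{1/2}`. -/
def jb (z : ℝ) : ℝ := Real.sqrt (1 + z ^ 2)

/-- Euclidean norm `|∂u|` of the space-time gradient. -/
def gradNorm (u : Pt → ℝ) (X : Pt) : ℝ := Real.sqrt (∑ a, (pd a u X) ^ 2)

/-- The unit-speed d'Alembertian `□ = ∂_t² - Δ_x`. -/
def box1 (u : Pt → ℝ) : Pt → ℝ := fun X =>
  pd 0 (pd 0 u) X - ∑ j : Fin 3, pd j.succ (pd j.succ u) X

/-- The d'Alembertian `∂_t² - c²Δ_x` with speed `c`. -/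
def boxc (c : ℝ) (u : Pt → ℝ) : Pt → ℝ := fun X =>
  pd 0 (pd 0 u) X - c ^ 2 * ∑ j : Fin 3, pd j.succ (pd j.succ u) X

/-!
The Klainerman–Sideris identities express `(t² - r²) Δh` and `(t² - r²) ∂_k ∂_t h` through `S h'`,
`Ω h'` and `t □h` with coefficients of size `t + r`. Dividing by `t + r` bounds `|t - r|` times
these derivatives pointwise by `|Γ h'|` and `(t + r) |□h|`.

The remaining derivatives `∂_i ∂_j h` are not controlled pointwise in this way, but they follow from
`Δh` by a weighted elliptic estimate on each time slice: `w (|D²u|² - (Δu)²)` is a divergence up to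
terms containing one factor `∇w`, and these can be absorbed as soon as `|∇w|² ≤ 4 w`. The weight
`w = ⟨t - r⟩²` has this property away from `r = 0`; replacing `r` by `√(1 + r²)` makes it smooth and
changes `⟨t - r⟩²` by at most a factor `3`.
-/

section Calculus

variable {E : Type*} [NormedAddCommGroup E] [NormedSpace ℝ E]

/-- The derivative `∂_v u` of `u` in the constant direction `v`; `pd a` is the case of the `a`-th
coordinate vector. -/
def dirDeriv (v : E) (u : E → ℝ) : E → ℝ := fun x => fderiv ℝ u x v

theorem contDiff_dirDeriv {m n : WithTop ℕ∞} {u : E → ℝ} (hu : ContDiff ℝ n u) (hmn : m + 1 ≤ n)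
    (v : E) : ContDiff ℝ m (dirDeriv v u) :=
  (hu.fderiv_right hmn).clm_apply contDiff_const

theorem dirDeriv_mul {f g : E → ℝ} (hf : Differentiable ℝ f) (hg : Differentiable ℝ g) (v : E) :
    dirDeriv v (fun x => f x * g x) =
      fun x => dirDeriv v f x * g x + f x * dirDeriv v g x := by
  funext x
  simp only [dirDeriv, fderiv_fun_mul (hf x) (hg x), add_apply, smul_apply, smul_eq_mul]
  ring

theorem dirDeriv_comm {u : E → ℝ} (hu : ContDiff ℝ 2 u) (v w : E) :
    dirDeriv v (dirDeriv w u) = dirDeriv w (dirDeriv v u) := by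
  have hd : Differentiable ℝ (fderiv ℝ u) :=
    (hu.fderiv_right (m := 1) (by norm_num)).differentiable one_ne_zero
  have second (a b : E) (x : E) : dirDeriv a (dirDeriv b u) x = fderiv ℝ (fderiv ℝ u) x a b := by
    change fderiv ℝ (fun y => fderiv ℝ u y b) x a = _
    simp [fderiv_clm_apply (hd x) (differentiableAt_const b)]
  have symm (x : E) : IsSymmSndFDerivAt ℝ u x := hu.contDiffAt.isSymmSndFDerivAt (by simp)
  funext x
  rw [second, second, (symm x).eq]

/-- The class `C_c^n` of `n` times continuously differentiable functions with compact support. -/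
structure CompactContDiff (n : ℕ) (f : E → ℝ) : Prop where
  contDiff : ContDiff ℝ n f
  hasCompactSupport : HasCompactSupport f

namespace CompactContDiff

variable {n : ℕ} {f g : E → ℝ}

theorem of_le {m : ℕ} (hf : CompactContDiff n f) (hmn : m ≤ n) : CompactContDiff m f :=
  ⟨hf.contDiff.of_le (by exact_mod_cast hmn), hf.hasCompactSupport⟩

theorem dirDeriv (hf : CompactContDiff (n + 1) f) (v : E) :
    CompactContDiff n (dirDeriv v f) :=
  ⟨contDiff_dirDeriv hf.contDiff (by norm_cast) v,
    hf.hasCompactSupport.fderiv_apply ℝ v⟩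

theorem mul_left (hg : CompactContDiff n g) (hf : ContDiff ℝ n f) :
    CompactContDiff n (fun x => f x * g x) :=
  ⟨hf.mul hg.contDiff, hg.hasCompactSupport.mul_left⟩

theorem sub (hf : CompactContDiff n f) (hg : CompactContDiff n g) :
    CompactContDiff n (fun x => f x - g x) :=
  ⟨hf.contDiff.sub hg.contDiff, hf.hasCompactSupport.sub hg.hasCompactSupport⟩

theorem sum {ι : Type*} {s : Finset ι} {F : ι → E → ℝ}
    (hF : ∀ i ∈ s, CompactContDiff n (F i)) : CompactContDiff n (fun x => ∑ i ∈ s, F i x) := by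
  classical
  induction s using Finset.induction_on with
  | empty =>
    simp only [Finset.sum_empty]
    exact ⟨contDiff_const, HasCompactSupport.zero⟩
  | insert i s hi ih =>
    simp only [Finset.sum_insert hi]
    have hs := ih fun j hj => hF j (Finset.mem_insert_of_mem hj)
    have hi := hF i (Finset.mem_insert_self i s)
    exact ⟨hi.contDiff.add hs.contDiff, hi.hasCompactSupport.add hs.hasCompactSupport⟩

theorem integrable [MeasurableSpace E] [BorelSpace E] {μ : Measure E} [IsFiniteMeasureOnCompacts μ]
    (hf : CompactContDiff n f) : Integrable f μ :=
  hf.contDiff.continuous.integrable_of_hasCompactSupport hf.hasCompactSupport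

end CompactContDiff

/-- The `(a, b)` term of `w (|D²u|² - (Δu)²)` corrected by first derivatives of `w`. It is a
divergence, so it integrates to zero. -/
def weightedMinor (w u : E → ℝ) (a b : E) (x : E) : ℝ :=
  w x * (dirDeriv a (dirDeriv b u) x ^ 2
      - dirDeriv a (dirDeriv a u) x * dirDeriv b (dirDeriv b u) x)
    + dirDeriv b u x * (dirDeriv a w x * dirDeriv a (dirDeriv b u) x
      - dirDeriv b w x * dirDeriv a (dirDeriv a u) x)

theorem weightedMinor_eq_sub {w u : E → ℝ} (hw : ContDiff ℝ 1 w) (hu : ContDiff ℝ 3 u) (a b : E) :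
    weightedMinor w u a b = fun x =>
      dirDeriv a (fun y => w y * (dirDeriv b u y * dirDeriv a (dirDeriv b u) y)) x
        - dirDeriv b (fun y => w y * (dirDeriv b u y * dirDeriv a (dirDeriv a u) y)) x := by
  have first (v : E) : ContDiff ℝ 2 (dirDeriv v u) := contDiff_dirDeriv hu (by norm_num) v
  have second (v : E) : Differentiable ℝ (dirDeriv a (dirDeriv v u)) :=
    (contDiff_dirDeriv (first v) (m := 1) (by norm_num) a).differentiable one_ne_zero
  have dw := hw.differentiable one_ne_zero
  have db := (first b).differentiable two_ne_zero
  have dab := second b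
  have daa := second a
  have third : dirDeriv a (dirDeriv a (dirDeriv b u)) = dirDeriv b (dirDeriv a (dirDeriv a u)) := by
    rw [dirDeriv_comm (hu.of_le (by norm_num)), dirDeriv_comm (first a)]
  rw [dirDeriv_mul dw (db.fun_mul dab), dirDeriv_mul dw (db.fun_mul daa), dirDeriv_mul db dab,
    dirDeriv_mul db daa, third]
  funext x
  unfold weightedMinor
  ring

end Calculus

theorem weighted_hessian_sq_le {ι : Type*} [Fintype ι] {W : ℝ} {w d : ι → ℝ} {D : ι → ι → ℝ}
    (hw : ∑ i, w i ^ 2 ≤ 4 * W) :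
    W * ∑ i, ∑ j, D i j ^ 2 ≤ 3 * (W * (∑ i, D i i) ^ 2) + 8 * ∑ j, d j ^ 2
      + 2 * ∑ i, ∑ j, (W * (D i j ^ 2 - D i i * D j j) + d j * (w i * D i j - w j * D i i)) := by
  have young (a b : ℝ) : a * b ≤ 2 * a ^ 2 + b ^ 2 / 8 := by nlinarith [sq_nonneg (4 * a - b)]
  have offdiagonal : -∑ j, d j * ∑ i, w i * D i j ≤
      2 * ∑ j, d j ^ 2 + W * (∑ i, ∑ j, D i j ^ 2) / 2 := by
    have column (j : ι) : -(d j * ∑ i, w i * D i j) ≤ 2 * d j ^ 2 + W * (∑ i, D i j ^ 2) / 2 := by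
      have cauchy := Finset.sum_mul_sq_le_sq_mul_sq univ w (D · j)
      have weight := mul_le_mul_of_nonneg_right hw
        (Finset.sum_nonneg fun i (_ : i ∈ univ) => sq_nonneg (D i j))
      linarith [young (-d j) (∑ i, w i * D i j)]
    rw [Finset.sum_comm (f := fun i j => D i j ^ 2), ← Finset.sum_neg_distrib, Finset.mul_sum,
      Finset.mul_sum, Finset.sum_div, ← Finset.sum_add_distrib]
    exact Finset.sum_le_sum fun j _ => column j
  have trace : ∑ j, d j * (w j * ∑ i, D i i) ≤ 2 * ∑ j, d j ^ 2 + W * (∑ i, D i i) ^ 2 / 2 := by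
    have entrywise := Finset.sum_le_sum fun j (_ : j ∈ univ) => young (d j) (w j * ∑ i, D i i)
    simp only [mul_pow, Finset.sum_add_distrib, ← Finset.mul_sum, ← Finset.sum_mul,
      ← Finset.sum_div] at entrywise
    linarith [mul_le_mul_of_nonneg_right hw (sq_nonneg (∑ i, D i i))]
  have expand : ∑ i, ∑ j, (W * (D i j ^ 2 - D i i * D j j) + d j * (w i * D i j - w j * D i i)) =
      W * ∑ i, ∑ j, D i j ^ 2 - W * (∑ i, D i i) ^ 2 + ∑ j, d j * ∑ i, w i * D i j
        - ∑ j, d j * (w j * ∑ i, D i i) := by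
    rw [sq (∑ i, D i i), Finset.sum_mul_sum]
    simp only [Finset.mul_sum]
    rw [Finset.sum_comm (f := fun j i => d j * (w i * D i j)),
      Finset.sum_comm (f := fun j i => d j * (w j * D i i))]
    simp only [← Finset.sum_add_distrib, ← Finset.sum_sub_distrib]
    exact Finset.sum_congr rfl fun i _ => Finset.sum_congr rfl fun j _ => by ring
  linarith

section WeightedElliptic

variable {E : Type*} [NormedAddCommGroup E] [NormedSpace ℝ E] [FiniteDimensional ℝ E]
  [MeasurableSpace E] [BorelSpace E] (μ : Measure E) [μ.IsAddHaarMeasure]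

theorem integral_dirDeriv_eq_zero {f : E → ℝ} (hf : CompactContDiff 1 f) (v : E) :
    ∫ x, dirDeriv v f x ∂μ = 0 := by
  have parts := integral_mul_fderiv_eq_neg_fderiv_mul_of_integrable (μ := μ) (v := v)
    (f := fun _ => (1 : ℝ)) (g := f) (by simp) (by simpa using! (hf.dirDeriv v).integrable)
    (by simpa using hf.integrable) (fun _ _ => differentiableAt_const _)
    (fun x _ => hf.contDiff.differentiable one_ne_zero x)
  simpa using! parts

theorem integral_weightedMinor {w u : E → ℝ} (hw : ContDiff ℝ 1 w) (hu : CompactContDiff 3 u)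
    (a b : E) :
    Integrable (weightedMinor w u a b) μ ∧ ∫ x, weightedMinor w u a b x ∂μ = 0 := by
  have flux {v : E → ℝ} (hv : CompactContDiff 1 v) :
      CompactContDiff 1 (fun y => w y * (dirDeriv b u y * v y)) :=
    (hv.mul_left ((hu.dirDeriv b).of_le one_le_two).contDiff).mul_left hw
  have fluxA := flux ((hu.dirDeriv b).dirDeriv a)
  have fluxB := flux ((hu.dirDeriv a).dirDeriv a)
  have intA := (fluxA.dirDeriv a).integrable (μ := μ)
  have intB := (fluxB.dirDeriv b).integrable (μ := μ)
  rw [weightedMinor_eq_sub hw hu.contDiff]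
  refine ⟨intA.sub intB, ?_⟩
  rw [integral_sub intA intB, integral_dirDeriv_eq_zero μ fluxA,
    integral_dirDeriv_eq_zero μ fluxB, sub_zero]

theorem integral_weighted_hessian_sq_le {ι : Type*} [Fintype ι] (v : ι → E) {w u : E → ℝ}
    (hw : ContDiff ℝ 1 w) (hw_grad : ∀ x, ∑ i, dirDeriv (v i) w x ^ 2 ≤ 4 * w x)
    (hu : CompactContDiff 3 u) :
    ∫ x, w x * ∑ i, ∑ j, dirDeriv (v i) (dirDeriv (v j) u) x ^ 2 ∂μ ≤
      3 * ∫ x, w x * (∑ i, dirDeriv (v i) (dirDeriv (v i) u) x) ^ 2 ∂μ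
        + 8 * ∫ x, ∑ j, dirDeriv (v j) u x ^ 2 ∂μ := by
  have cc (i j : ι) := (hu.dirDeriv (v j)).dirDeriv (v i)
  have intHess :
      Integrable (fun x => w x * ∑ i, ∑ j, dirDeriv (v i) (dirDeriv (v j) u) x ^ 2) μ := by
    simp only [sq]
    have hessian := CompactContDiff.sum (s := univ) fun i _ =>
      CompactContDiff.sum (s := univ) fun j _ => (cc i j).mul_left (cc i j).contDiff
    exact (hessian.mul_left hw).integrable
  have intLap : Integrable (fun x => w x * (∑ i, dirDeriv (v i) (dirDeriv (v i) u) x) ^ 2) μ := by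
    have lap := CompactContDiff.sum (s := univ) fun i _ => cc i i
    simp only [sq]
    exact ((lap.mul_left lap.contDiff).mul_left hw).integrable
  have intGrad : Integrable (fun x => ∑ j, dirDeriv (v j) u x ^ 2) μ := by
    simp only [sq]
    exact (CompactContDiff.sum fun j _ =>
      (hu.dirDeriv (v j)).mul_left (hu.dirDeriv (v j)).contDiff).integrable
  have minor (i j : ι) := integral_weightedMinor μ hw hu (v i) (v j)
  have intRow (i : ι) : Integrable (fun x => ∑ j, weightedMinor w u (v i) (v j) x) μ :=
    integrable_finsetSum _ fun j _ => (minor i j).1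
  have intMinor : Integrable (fun x => ∑ i, ∑ j, weightedMinor w u (v i) (v j) x) μ :=
    integrable_finsetSum _ fun i _ => intRow i
  have minor_zero : ∫ x, ∑ i, ∑ j, weightedMinor w u (v i) (v j) x ∂μ = 0 := by
    rw [integral_finsetSum _ fun i _ => intRow i]
    refine Finset.sum_eq_zero fun i _ => ?_
    rw [integral_finsetSum _ fun j _ => (minor i j).1]
    exact Finset.sum_eq_zero fun j _ => (minor i j).2
  calc _ ≤ ∫ x, (3 * (w x * (∑ i, dirDeriv (v i) (dirDeriv (v i) u) x) ^ 2)
          + 8 * ∑ j, dirDeriv (v j) u x ^ 2)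
          + 2 * ∑ i, ∑ j, weightedMinor w u (v i) (v j) x ∂μ :=
        integral_mono intHess (((intLap.const_mul 3).fun_add (intGrad.const_mul 8)).add
          (intMinor.const_mul 2)) fun x => weighted_hessian_sq_le (hw_grad x)
    _ = _ := by
      rw [integral_add ((intLap.const_mul 3).fun_add (intGrad.const_mul 8)) (intMinor.const_mul 2),
        integral_add (intLap.const_mul 3) (intGrad.const_mul 8)]
      simp only [integral_const_mul, minor_zero, mul_zero, add_zero]

end WeightedElliptic

section Weight

theorem jb_sq (z : ℝ) : jb z ^ 2 = 1 + z ^ 2 := Real.sq_sqrt (by positivity)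

theorem continuous_jb : Continuous jb := by unfold jb; fun_prop

theorem jb_sq_le_three_mul_jb_sq {a b : ℝ} (hab : |a - b| ≤ 1) : jb a ^ 2 ≤ 3 * jb b ^ 2 := by
  rw [jb_sq, jb_sq]
  nlinarith [(sq_le_one_iff_abs_le_one _).2 hab, sq_nonneg (a - 2 * b)]

theorem contDiff_jb_sub_sq {E : Type*} [NormedAddCommGroup E] [NormedSpace ℝ E] {φ : E → ℝ}
    {n : WithTop ℕ∞} (hφ : ContDiff ℝ n φ) (t : ℝ) : ContDiff ℝ n (fun x => jb (t - φ x) ^ 2) := by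
  simp only [jb_sq]
  fun_prop

theorem sum_dirDeriv_jb_sub_sq_le {E : Type*} [NormedAddCommGroup E] [NormedSpace ℝ E]
    {ι : Type*} [Fintype ι] {v : ι → E} {φ : E → ℝ} {x : E} (hφ : DifferentiableAt ℝ φ x)
    (hgrad : ∑ i, dirDeriv (v i) φ x ^ 2 ≤ 1) (t : ℝ) :
    ∑ i, dirDeriv (v i) (fun y => jb (t - φ y) ^ 2) x ^ 2 ≤ 4 * jb (t - φ x) ^ 2 := by
  have chain (i : ι) :
      dirDeriv (v i) (fun y => jb (t - φ y) ^ 2) x = -2 * (t - φ x) * dirDeriv (v i) φ x := by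
    have h := ((hφ.hasFDerivAt.const_sub t).pow 2).const_add 1
    simp only [jb_sq]
    simp [dirDeriv, h.fderiv]
  simp only [chain, mul_pow, ← Finset.mul_sum]
  rw [jb_sq]
  nlinarith [mul_le_mul_of_nonneg_left hgrad (sq_nonneg (t - φ x))]

variable {ι : Type*} [Fintype ι]

/-- The regularization `√(1 + |x|²)` of the Euclidean length, which is smooth at the origin. -/
def smoothRad (x : ι → ℝ) : ℝ := √(1 + ∑ i, x i ^ 2)

theorem one_add_sum_sq_pos (x : ι → ℝ) : 0 < 1 + ∑ i, x i ^ 2 := by positivity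

theorem contDiff_smoothRad {n : WithTop ℕ∞} : ContDiff ℝ n (smoothRad : (ι → ℝ) → ℝ) :=
  ContDiff.sqrt (by fun_prop) fun x => (one_add_sum_sq_pos x).ne'

theorem dirDeriv_smoothRad [DecidableEq ι] (i : ι) (x : ι → ℝ) :
    dirDeriv (Pi.single i 1) smoothRad x = x i / smoothRad x := by
  have sumSq : HasFDerivAt (fun y : ι → ℝ => ∑ j, y j ^ 2)
      (∑ j, (2 * x j) • ContinuousLinearMap.proj j : (ι → ℝ) →L[ℝ] ℝ) x := by
    refine HasFDerivAt.fun_sum fun j _ => ?_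
    have coord : HasFDerivAt (fun y : ι → ℝ => y j) (.proj j : (ι → ℝ) →L[ℝ] ℝ) x :=
      hasFDerivAt_apply j x
    simpa using coord.pow 2
  have h : HasFDerivAt smoothRad _ x := (sumSq.const_add 1).sqrt (one_add_sum_sq_pos x).ne'
  rw [dirDeriv, h.fderiv]
  simp [Pi.single_apply, smoothRad]
  field_simp

theorem sum_dirDeriv_smoothRad_sq_le_one [DecidableEq ι] (x : ι → ℝ) :
    ∑ i, dirDeriv (Pi.single i 1) smoothRad x ^ 2 ≤ 1 := by
  have pos := one_add_sum_sq_pos x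
  simp only [dirDeriv_smoothRad, div_pow, ← Finset.sum_div]
  rw [smoothRad, Real.sq_sqrt pos.le, div_le_one pos]
  linarith

theorem abs_smoothRad_sub_sqrt_le_one (x : ι → ℝ) : |smoothRad x - √(∑ i, x i ^ 2)| ≤ 1 := by
  have le : √(∑ i, x i ^ 2) ≤ smoothRad x := Real.sqrt_le_sqrt (by linarith)
  have ge : smoothRad x ≤ 1 + √(∑ i, x i ^ 2) := by
    refine Real.sqrt_le_iff.2 ⟨by positivity, ?_⟩
    nlinarith [Real.sq_sqrt (Finset.sum_nonneg fun i (_ : i ∈ univ) => sq_nonneg (x i)),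
      Real.sqrt_nonneg (∑ i, x i ^ 2)]
  rw [abs_of_nonneg (by linarith)]
  linarith

end Weight

section Slice

variable {n : ℕ}

theorem isClosedEmbedding_finCons (t : ℝ) :
    Topology.IsClosedEmbedding (fun x : Fin n → ℝ => (Fin.cons t x : Fin (n + 1) → ℝ)) :=
  Function.LeftInverse.isClosedEmbedding (f := fun X i => X (Fin.succ i))
    (fun _ => Fin.tail_cons _ _) (by fun_prop) (continuous_const.finCons continuous_id)

theorem hasFDerivAt_finCons_const (t : ℝ) (x : Fin n → ℝ) :
    HasFDerivAt (fun y : Fin n → ℝ => (Fin.cons t y : Fin (n + 1) → ℝ))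
      (ContinuousLinearMap.finCons 0 (.id ℝ _)) x :=
  (hasFDerivAt_const t x).finCons (hasFDerivAt_id x)

theorem dirDeriv_slice {F : (Fin (n + 1) → ℝ) → ℝ} (hF : Differentiable ℝ F) (t : ℝ) (j : Fin n) :
    dirDeriv (Pi.single j 1) (fun x => F (Fin.cons t x)) =
      fun x => dirDeriv (Pi.single j.succ 1) F (Fin.cons t x) := by
  funext x
  have chain := (hF (Fin.cons t x)).hasFDerivAt.comp x (hasFDerivAt_finCons_const t x)
  have single : (Fin.cons 0 (Pi.single j 1) : Fin (n + 1) → ℝ) = Pi.single j.succ 1 := by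
    ext i
    cases i using Fin.cases <;> simp [Pi.single_apply, eq_comm]
  change fderiv ℝ (F ∘ _) x _ = _
  rw [chain.fderiv, ContinuousLinearMap.comp_apply]
  exact congrArg (fderiv ℝ F (Fin.cons t x)) single

theorem CompactContDiff.slice {k : ℕ} {F : (Fin (n + 1) → ℝ) → ℝ} (hF : CompactContDiff k F)
    (t : ℝ) : CompactContDiff k (fun x : Fin n → ℝ => F (Fin.cons t x)) := by
  refine ⟨hF.contDiff.comp (contDiff_pi.2 (Fin.cases contDiff_const fun i => ?_)),
    hF.hasCompactSupport.comp_isClosedEmbedding (isClosedEmbedding_finCons t)⟩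
  simpa using contDiff_apply ℝ ℝ i

theorem CompactContDiff.integrable_mul_slice_sq {k : ℕ} {F : (Fin (n + 1) → ℝ) → ℝ}
    (hF : CompactContDiff k F) {w : (Fin n → ℝ) → ℝ} (hw : Continuous w) (t : ℝ) :
    Integrable (fun x => w x * F (Fin.cons t x) ^ 2) := by
  have sq_slice := ((hF.mul_left hF.contDiff).slice t).of_le (Nat.zero_le k)
  simpa only [sq] using (sq_slice.mul_left (contDiff_zero.2 hw)).integrable

theorem CompactContDiff.integrable_sum_slice_sq {κ : Type*} {s : Finset κ} {k : ℕ}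
    {F : κ → (Fin (n + 1) → ℝ) → ℝ} (hF : ∀ i, CompactContDiff k (F i)) (t : ℝ) :
    Integrable (fun x : Fin n → ℝ => ∑ i ∈ s, F i (Fin.cons t x) ^ 2) :=
  integrable_finsetSum _ fun i _ => by
    simpa using (hF i).integrable_mul_slice_sq continuous_one t

theorem integral_slice_hessian_sq_le {h : (Fin (n + 1) → ℝ) → ℝ} (hh : CompactContDiff 3 h)
    (t : ℝ) :
    ∫ x : Fin n → ℝ, jb (t - smoothRad x) ^ 2 * ∑ i : Fin n, ∑ j : Fin n,
        dirDeriv (Pi.single i.succ 1) (dirDeriv (Pi.single j.succ 1) h) (Fin.cons t x) ^ 2 ≤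
      3 * (∫ x : Fin n → ℝ, jb (t - smoothRad x) ^ 2 * (∑ i : Fin n,
        dirDeriv (Pi.single i.succ 1) (dirDeriv (Pi.single i.succ 1) h) (Fin.cons t x)) ^ 2)
      + 8 * ∫ x : Fin n → ℝ, ∑ j : Fin n,
        dirDeriv (Pi.single j.succ 1) h (Fin.cons t x) ^ 2 := by
  have gradient (j : Fin n) := dirDeriv_slice (hh.contDiff.differentiable three_ne_zero) t j
  have hessian (i j : Fin n) :=
    dirDeriv_slice ((hh.dirDeriv (Pi.single j.succ 1)).contDiff.differentiable two_ne_zero) t i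
  have estimate := integral_weighted_hessian_sq_le volume (fun j : Fin n => Pi.single j 1)
    (contDiff_jb_sub_sq contDiff_smoothRad t)
    (fun x => sum_dirDeriv_jb_sub_sq_le (contDiff_smoothRad.differentiable one_ne_zero x)
      (sum_dirDeriv_smoothRad_sq_le_one x) t) (hh.slice t)
  simpa only [gradient, hessian] using estimate

end Slice

section KlainermanSideris

variable {ι : Type*} [Fintype ι]

theorem sq_sub_sum_sq_mul_trace (t p : ℝ) (x v : ι → ℝ) (M : ι → ι → ℝ) :
    (t ^ 2 - ∑ i, x i ^ 2) * ∑ i, M i i =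
      t * (t * p + ∑ i, x i * v i) - ∑ i, x i * (t * v i + ∑ j, x j * M j i)
        - ∑ i, x i * ∑ j, (x i * M j j - x j * M i j) - t * (t * (p - ∑ i, M i i)) := by
  have radial : ∑ i, x i * (t * v i + ∑ j, x j * M j i) =
      t * ∑ i, x i * v i + ∑ i, x i * ∑ j, x j * M i j := by
    simp only [mul_add, Finset.sum_add_distrib, Finset.mul_sum]
    rw [Finset.sum_comm (f := fun i j => x i * (x j * M j i))]
    congr 1 <;> simp only [mul_left_comm]
  have angular : ∑ i, x i * ∑ j, (x i * M j j - x j * M i j) =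
      (∑ i, x i ^ 2) * ∑ i, M i i - ∑ i, x i * ∑ j, x j * M i j := by
    simp only [Finset.sum_sub_distrib, mul_sub, ← Finset.mul_sum, ← mul_assoc, ← sq,
      ← Finset.sum_mul]
  rw [radial, angular]
  ring

theorem sq_sub_sum_sq_mul_mixed (t p : ℝ) (x v : ι → ℝ) {M : ι → ι → ℝ}
    (hM : ∀ i j, M i j = M j i) (k : ι) :
    (t ^ 2 - ∑ i, x i ^ 2) * v k =
      t * (t * v k + ∑ j, x j * M j k) - x k * (t * p + ∑ i, x i * v i)
        + t * ∑ j, (x k * M j j - x j * M k j) + x k * (t * (p - ∑ i, M i i))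
        - ∑ i, x i * (x i * v k - x k * v i) := by
  have angular : ∑ i, x i * (x i * v k - x k * v i) =
      (∑ i, x i ^ 2) * v k - x k * ∑ i, x i * v i := by
    simp only [mul_sub, Finset.sum_sub_distrib, ← mul_assoc, ← sq, ← Finset.sum_mul,
      mul_comm _ (x k)]
    simp only [mul_assoc, ← Finset.mul_sum]
  rw [angular, Finset.sum_sub_distrib, ← Finset.mul_sum]
  simp only [hM k]
  ring

theorem abs_sum_mul_le {f g : ι → ℝ} {a b : ℝ} (hf : ∀ i, |f i| ≤ a) (hg : ∀ i, |g i| ≤ b) :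
    |∑ i, f i * g i| ≤ Fintype.card ι * (a * b) :=
  calc |∑ i, f i * g i| ≤ ∑ _i : ι, a * b :=
        norm_sum_le_of_le (E := ℝ) _ fun i _ => norm_mul_le_of_le (hf i) (hg i)
    _ = _ := by simp

theorem abs_sub_mul_abs_le {t r z K : ℝ} (ht : 0 ≤ t) (hr : 0 ≤ r) (hK : 0 ≤ K)
    (hz : |(t ^ 2 - r ^ 2) * z| ≤ (t + r) * K) : |t - r| * |z| ≤ K := by
  rcases (add_nonneg ht hr).eq_or_lt with hzero | hpos
  · have htr : t - r = 0 := by linarith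
    simpa [htr] using hK
  · refine le_of_mul_le_mul_left ?_ hpos
    calc (t + r) * (|t - r| * |z|) = |(t ^ 2 - r ^ 2) * z| := by
          rw [sq_sub_sq, abs_mul, abs_mul, abs_of_pos hpos, mul_assoc]
      _ ≤ _ := hz

theorem abs_apply_le_of_sum_sq_eq {x : ι → ℝ} {r : ℝ} (hr : 0 ≤ r) (hx : ∑ i, x i ^ 2 = r ^ 2)
    (i : ι) : |x i| ≤ r :=
  abs_le_of_sq_le_sq (hx ▸ Finset.single_le_sum (f := fun j => x j ^ 2)
    (fun j _ => sq_nonneg (x j)) (mem_univ i)) hr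

variable {t r e p : ℝ} {x v : ι → ℝ} {M : ι → ι → ℝ}

theorem abs_mul_le_of_add_mul_abs_le {q : ℝ} (ht : 0 ≤ t) (hr : 0 ≤ r) (hq : (t + r) * |q| ≤ e) :
    |t * q| ≤ e := by
  rw [abs_mul, abs_of_nonneg ht]
  exact (mul_le_mul_of_nonneg_right (by linarith) (abs_nonneg q)).trans hq

theorem abs_sub_mul_abs_trace_le (ht : 0 ≤ t) (hr : 0 ≤ r) (hx : ∑ i, x i ^ 2 = r ^ 2)
    (hscal₀ : |t * p + ∑ i, x i * v i| ≤ e) (hscal : ∀ i, |t * v i + ∑ j, x j * M j i| ≤ e)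
    (hrot : ∀ i j, |x i * M j j - x j * M i j| ≤ e) (hbox : (t + r) * |p - ∑ i, M i i| ≤ e) :
    |t - r| * |∑ i, M i i| ≤ (Fintype.card ι ^ 2 + Fintype.card ι + 2) * e := by
  have he : 0 ≤ e := (abs_nonneg _).trans hscal₀
  have hxi (i : ι) : |x i| ≤ t + r := (abs_apply_le_of_sum_sq_eq hr hx i).trans (by linarith)
  have htt : |t| ≤ t + r := by rw [abs_of_nonneg ht]; linarith
  have rotSum (i : ι) : |∑ j, (x i * M j j - x j * M i j)| ≤ Fintype.card ι * e := by
    simpa using abs_sum_mul_le (f := fun _ => 1) (a := 1) (by simp) (hrot i)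
  have time := norm_mul_le_of_le (α := ℝ) htt hscal₀
  have space := abs_sum_mul_le hxi hscal
  have rotation := abs_sum_mul_le hxi rotSum
  have wave := norm_mul_le_of_le (α := ℝ) htt (abs_mul_le_of_add_mul_abs_le ht hr hbox)
  refine abs_sub_mul_abs_le ht hr (by positivity) ?_
  rw [← hx, sq_sub_sum_sq_mul_trace t p x v M]
  calc _ ≤ (t + r) * e + Fintype.card ι * ((t + r) * e)
        + Fintype.card ι * ((t + r) * (Fintype.card ι * e)) + (t + r) * e :=
      norm_sub_le_of_le (E := ℝ) (norm_sub_le_of_le (E := ℝ)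
        (norm_sub_le_of_le time space) rotation) wave
    _ = _ := by ring

theorem abs_sub_mul_abs_mixed_le (ht : 0 ≤ t) (hr : 0 ≤ r) (hx : ∑ i, x i ^ 2 = r ^ 2)
    (hM : ∀ i j, M i j = M j i) (hscal₀ : |t * p + ∑ i, x i * v i| ≤ e)
    (hscal : ∀ i, |t * v i + ∑ j, x j * M j i| ≤ e) (hrot₀ : ∀ i j, |x i * v j - x j * v i| ≤ e)
    (hrot : ∀ i j, |x i * M j j - x j * M i j| ≤ e) (hbox : (t + r) * |p - ∑ i, M i i| ≤ e)
    (k : ι) : |t - r| * |v k| ≤ (2 * Fintype.card ι + 3) * e := by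
  have he : 0 ≤ e := (abs_nonneg _).trans hscal₀
  have hxi (i : ι) : |x i| ≤ t + r := (abs_apply_le_of_sum_sq_eq hr hx i).trans (by linarith)
  have htt : |t| ≤ t + r := by rw [abs_of_nonneg ht]; linarith
  have rotSum : |∑ j, (x k * M j j - x j * M k j)| ≤ Fintype.card ι * e := by
    simpa using abs_sum_mul_le (f := fun _ => 1) (a := 1) (by simp) (hrot k)
  have time := norm_mul_le_of_le (α := ℝ) htt (hscal k)
  have space := norm_mul_le_of_le (α := ℝ) (hxi k) hscal₀
  have rotation := norm_mul_le_of_le (α := ℝ) htt rotSum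
  have wave := norm_mul_le_of_le (α := ℝ) (hxi k) (abs_mul_le_of_add_mul_abs_le ht hr hbox)
  have rotation₀ := abs_sum_mul_le hxi fun i => hrot₀ i k
  refine abs_sub_mul_abs_le ht hr (by positivity) ?_
  rw [← hx, sq_sub_sum_sq_mul_mixed t p x v hM k]
  calc _ ≤ (t + r) * e + (t + r) * e + (t + r) * (Fintype.card ι * e) + (t + r) * e
        + Fintype.card ι * ((t + r) * e) :=
      norm_sub_le_of_le (E := ℝ) (norm_add_le_of_le (norm_add_le_of_le
        (norm_sub_le_of_le time space) rotation) wave) rotation₀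
    _ = _ := by ring

end KlainermanSideris

section Density

/-- The pointwise Klainerman–Sideris density
`∑_{|α| ≤ 1} |Γ^α h'|² + ⟨t + r⟩² (□h)²` at `(t, x)`, whose integral over `x` bounds the square of
the left-hand side. -/
def ksDensity (h : Pt → ℝ) (t : ℝ) (x : Sp) : ℝ :=
  ∑ a, pd a h (Fin.cons t x) ^ 2 + ∑ k, ∑ a, Gam k (pd a h) (Fin.cons t x) ^ 2
    + jb (t + rad x) ^ 2 * box1 h (Fin.cons t x) ^ 2

variable (h : Pt → ℝ) (t : ℝ) (x : Sp)

theorem ksDensity_nonneg : 0 ≤ ksDensity h t x := by unfold ksDensity; positivity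

theorem sum_pd_sq_le_ksDensity :
    ∑ j : Fin 3, pd j.succ h (Fin.cons t x) ^ 2 ≤ ksDensity h t x := by
  have gamma : 0 ≤ ∑ k, ∑ a, Gam k (pd a h) (Fin.cons t x) ^ 2 := by positivity
  have wave : 0 ≤ jb (t + rad x) ^ 2 * box1 h (Fin.cons t x) ^ 2 := by positivity
  rw [ksDensity, Fin.sum_univ_succ fun a => pd a h (Fin.cons t x) ^ 2]
  linarith [sq_nonneg (pd 0 h (Fin.cons t x))]

theorem abs_gam_pd_le (k : Fin 8) (a : Fin 4) :
    |Gam k (pd a h) (Fin.cons t x)| ≤ √(ksDensity h t x) := by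
  have row := Finset.single_le_sum (f := fun l => ∑ b, Gam l (pd b h) (Fin.cons t x) ^ 2)
    (fun l _ => by positivity) (mem_univ k)
  have entry := Finset.single_le_sum (f := fun b => Gam k (pd b h) (Fin.cons t x) ^ 2)
    (fun b _ => sq_nonneg _) (mem_univ a)
  have gradient : 0 ≤ ∑ b, pd b h (Fin.cons t x) ^ 2 := by positivity
  have wave : 0 ≤ jb (t + rad x) ^ 2 * box1 h (Fin.cons t x) ^ 2 := by positivity
  refine Real.abs_le_sqrt ((entry.trans row).trans ?_)
  rw [ksDensity]
  linarith

theorem abs_pd_pd_le (a b : Fin 4) : |pd a (pd b h) (Fin.cons t x)| ≤ √(ksDensity h t x) := by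
  fin_cases a
  exacts [abs_gam_pd_le h t x 0 b, abs_gam_pd_le h t x 1 b, abs_gam_pd_le h t x 2 b,
    abs_gam_pd_le h t x 3 b]

theorem abs_rot_pd_le (i j : Fin 3) (a : Fin 4) :
    |rot i.succ j.succ (pd a h) (Fin.cons t x)| ≤ √(ksDensity h t x) := by
  have diagonal (b : Fin 4) : |rot b b (pd a h) (Fin.cons t x)| ≤ √(ksDensity h t x) := by
    simp [rot]
  have antisymm {b c : Fin 4} (hbc : |rot b c (pd a h) (Fin.cons t x)| ≤ √(ksDensity h t x)) :
      |rot c b (pd a h) (Fin.cons t x)| ≤ √(ksDensity h t x) := by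
    rwa [rot, abs_sub_comm]
  have rot₁₂ := abs_gam_pd_le h t x 4 a
  have rot₁₃ := abs_gam_pd_le h t x 5 a
  have rot₂₃ := abs_gam_pd_le h t x 6 a
  fin_cases i <;> fin_cases j
  exacts [diagonal 1, rot₁₂, rot₁₃, antisymm rot₁₂, diagonal 2, rot₂₃, antisymm rot₁₃,
    antisymm rot₂₃, diagonal 3]

theorem add_rad_mul_abs_box1_le :
    (t + rad x) * |pd 0 (pd 0 h) (Fin.cons t x) -
      ∑ j : Fin 3, pd j.succ (pd j.succ h) (Fin.cons t x)| ≤ √(ksDensity h t x) := by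
  have gradient : 0 ≤ ∑ a, pd a h (Fin.cons t x) ^ 2 := by positivity
  have gamma : 0 ≤ ∑ k, ∑ a, Gam k (pd a h) (Fin.cons t x) ^ 2 := by positivity
  refine Real.le_sqrt_of_sq_le ?_
  rw [← box1, ksDensity, jb_sq, mul_pow, sq_abs]
  nlinarith [sq_nonneg (box1 h (Fin.cons t x))]

theorem rad_nonneg : 0 ≤ rad x := Real.sqrt_nonneg _

theorem sum_sq_eq_rad_sq : ∑ i, x i ^ 2 = rad x ^ 2 := (Real.sq_sqrt (by positivity)).symm

variable {h t}

theorem abs_scal_pd_le (hh : ContDiff ℝ 2 h) (a : Fin 4) :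
    |t * pd a (pd 0 h) (Fin.cons t x) + ∑ j, x j * pd j.succ (pd a h) (Fin.cons t x)| ≤
      √(ksDensity h t x) := by
  have comm : pd a (pd 0 h) = pd 0 (pd a h) := dirDeriv_comm hh _ _
  have scaling : |scal (pd a h) (Fin.cons t x)| ≤ √(ksDensity h t x) := abs_gam_pd_le h t x 7 a
  rwa [scal, Fin.sum_univ_succ, ← comm] at scaling

theorem abs_sub_rad_mul_abs_laplacian_le (hh : ContDiff ℝ 2 h) (ht : 0 ≤ t) :
    |t - rad x| * |∑ j : Fin 3, pd j.succ (pd j.succ h) (Fin.cons t x)| ≤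
      14 * √(ksDensity h t x) := by
  have estimate := abs_sub_mul_abs_trace_le ht (rad_nonneg x) (sum_sq_eq_rad_sq x)
    (v := fun i : Fin 3 => pd i.succ (pd 0 h) (Fin.cons t x))
    (M := fun i j : Fin 3 => pd i.succ (pd j.succ h) (Fin.cons t x))
    (abs_scal_pd_le x hh 0) (fun i => abs_scal_pd_le x hh i.succ)
    (fun i j => abs_rot_pd_le h t x i j j.succ) (add_rad_mul_abs_box1_le h t x)
  norm_num at estimate
  exact estimate

theorem abs_sub_rad_mul_abs_mixed_le (hh : ContDiff ℝ 2 h) (ht : 0 ≤ t) (k : Fin 3) :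
    |t - rad x| * |pd k.succ (pd 0 h) (Fin.cons t x)| ≤ 9 * √(ksDensity h t x) := by
  have comm (i j : Fin 3) : pd i.succ (pd j.succ h) = pd j.succ (pd i.succ h) :=
    dirDeriv_comm hh _ _
  have estimate := abs_sub_mul_abs_mixed_le ht (rad_nonneg x) (sum_sq_eq_rad_sq x)
    (v := fun i : Fin 3 => pd i.succ (pd 0 h) (Fin.cons t x))
    (M := fun i j : Fin 3 => pd i.succ (pd j.succ h) (Fin.cons t x))
    (fun i j => congrFun (comm i j) _)
    (abs_scal_pd_le x hh 0) (fun i => abs_scal_pd_le x hh i.succ)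
    (fun i j => abs_rot_pd_le h t x i j 0) (fun i j => abs_rot_pd_le h t x i j j.succ)
    (add_rad_mul_abs_box1_le h t x) k
  norm_num at estimate
  exact estimate

theorem jb_sq_mul_sq_le {s z c K E : ℝ} (hE : 0 ≤ E) (hz : |z| ≤ c * √E)
    (hsz : |s| * |z| ≤ K * √E) : jb s ^ 2 * z ^ 2 ≤ (c ^ 2 + K ^ 2) * E := by
  have low := pow_le_pow_left₀ (abs_nonneg z) hz 2
  have high := pow_le_pow_left₀ (by positivity) hsz 2
  rw [mul_pow, Real.sq_sqrt hE, sq_abs] at low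
  rw [mul_pow, mul_pow, Real.sq_sqrt hE, sq_abs, sq_abs] at high
  rw [jb_sq]
  linarith

theorem jb_sq_mul_laplacian_sq_le (hh : ContDiff ℝ 2 h) (ht : 0 ≤ t) :
    jb (t - rad x) ^ 2 * (∑ j : Fin 3, pd j.succ (pd j.succ h) (Fin.cons t x)) ^ 2 ≤
      205 * ksDensity h t x := by
  have bound : |∑ j : Fin 3, pd j.succ (pd j.succ h) (Fin.cons t x)| ≤
      3 * √(ksDensity h t x) := by
    simpa using abs_sum_mul_le (f := fun _ => 1) (a := 1) (by simp)
      fun j : Fin 3 => abs_pd_pd_le h t x j.succ j.succ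
  have estimate := jb_sq_mul_sq_le (ksDensity_nonneg h t x) bound
    (abs_sub_rad_mul_abs_laplacian_le x hh ht)
  norm_num at estimate
  exact estimate

theorem jb_sq_mul_mixed_sq_le (hh : ContDiff ℝ 2 h) (ht : 0 ≤ t) (k : Fin 3) :
    jb (t - rad x) ^ 2 * pd k.succ (pd 0 h) (Fin.cons t x) ^ 2 ≤ 82 * ksDensity h t x := by
  have estimate := jb_sq_mul_sq_le (c := 1) (ksDensity_nonneg h t x)
    (by simpa using abs_pd_pd_le h t x k.succ 0) (abs_sub_rad_mul_abs_mixed_le x hh ht k)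
  norm_num at estimate
  exact estimate

theorem jb_sub_rad_sq_le : jb (t - rad x) ^ 2 ≤ 3 * jb (t - smoothRad x) ^ 2 :=
  jb_sq_le_three_mul_jb_sq <| by
    rw [sub_sub_sub_cancel_left]
    exact abs_smoothRad_sub_sqrt_le_one x

theorem jb_sub_smoothRad_sq_le : jb (t - smoothRad x) ^ 2 ≤ 3 * jb (t - rad x) ^ 2 :=
  jb_sq_le_three_mul_jb_sq <| by
    rw [sub_sub_sub_cancel_left, abs_sub_comm]
    exact abs_smoothRad_sub_sqrt_le_one x

theorem jb_sq_mul_hessian_sq_le (hh : ContDiff ℝ 2 h) (ht : 0 ≤ t) :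
    jb (t - rad x) ^ 2 * ∑ j : Fin 3, ∑ a : Fin 4, pd j.succ (pd a h) (Fin.cons t x) ^ 2 ≤
      246 * ksDensity h t x + 3 * (jb (t - smoothRad x) ^ 2 *
        ∑ i : Fin 3, ∑ j : Fin 3, pd i.succ (pd j.succ h) (Fin.cons t x) ^ 2) := by
  have mixed := Finset.sum_le_sum fun k (_ : k ∈ univ) => jb_sq_mul_mixed_sq_le x hh ht k
  have spatial : 0 ≤ ∑ i : Fin 3, ∑ j : Fin 3, pd i.succ (pd j.succ h) (Fin.cons t x) ^ 2 := by
    positivity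
  simp only [← Finset.mul_sum, Finset.sum_const, card_univ, Fintype.card_fin, nsmul_eq_mul]
    at mixed
  simp only [Fin.sum_univ_succ (n := 3), Finset.sum_add_distrib]
  push_cast at mixed
  linarith [mul_le_mul_of_nonneg_right (jb_sub_rad_sq_le (t := t) x) spatial]

end Density

section Integration

variable {h : Pt → ℝ} {t : ℝ}

theorem CompactContDiff.pd {n : ℕ} (hh : CompactContDiff (n + 1) h) (a : Fin 4) :
    CompactContDiff n (pd a h) :=
  hh.dirDeriv _

theorem CompactContDiff.gam {n : ℕ} (hh : CompactContDiff (n + 1) h) (k : Fin 8) :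
    CompactContDiff n (Gam k h) := by
  have coord_mul_pd (a b : Fin 4) : CompactContDiff n fun X => X a * _root_.pd b h X :=
    (hh.pd b).mul_left (contDiff_apply ℝ ℝ a)
  have rotation (a b : Fin 4) : CompactContDiff n (rot a b h) :=
    (coord_mul_pd a b).sub (coord_mul_pd b a)
  have scaling : CompactContDiff n (scal h) := .sum fun a _ => coord_mul_pd a a
  fin_cases k
  exacts [hh.pd 0, hh.pd 1, hh.pd 2, hh.pd 3, rotation 1 2, rotation 1 3, rotation 2 3, scaling]

theorem CompactContDiff.box1 {n : ℕ} (hh : CompactContDiff (n + 2) h) :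
    CompactContDiff n (box1 h) :=
  ((hh.pd 0).pd 0).sub (.sum fun j _ => (hh.pd j.succ).pd j.succ)

theorem continuous_rad : Continuous rad := by unfold rad; fun_prop

theorem CompactContDiff.integrable_weighted_box1_sq (hh : CompactContDiff 2 h) (t : ℝ) :
    Integrable (fun x => jb (t + rad x) ^ 2 * _root_.box1 h (Fin.cons t x) ^ 2) :=
  hh.box1.integrable_mul_slice_sq
    ((continuous_jb.comp (continuous_const.add continuous_rad)).pow 2) t

theorem CompactContDiff.integrable_ksDensity (hh : CompactContDiff 2 h) (t : ℝ) :
    Integrable (ksDensity h t) :=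
  ((CompactContDiff.integrable_sum_slice_sq hh.pd t).fun_add
    (integrable_finsetSum _ fun k _ =>
      CompactContDiff.integrable_sum_slice_sq (fun a => (hh.pd a).gam k) t)).fun_add
    (hh.integrable_weighted_box1_sq t)

theorem integral_ksDensity (hh : CompactContDiff 2 h) :
    ∫ x, ksDensity h t x =
      (∫ x : Sp, ∑ a, pd a h (Fin.cons t x) ^ 2)
        + ∑ k, (∫ x : Sp, ∑ a, Gam k (pd a h) (Fin.cons t x) ^ 2)
        + ∫ x : Sp, jb (t + rad x) ^ 2 * box1 h (Fin.cons t x) ^ 2 := by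
  have gradient := CompactContDiff.integrable_sum_slice_sq (s := univ) hh.pd t
  have gamma (k : Fin 8) :=
    CompactContDiff.integrable_sum_slice_sq (s := univ) (fun a => (hh.pd a).gam k) t
  have gammaSum := integrable_finsetSum univ fun k _ => gamma k
  simp only [ksDensity]
  rw [integral_add (gradient.fun_add gammaSum) (hh.integrable_weighted_box1_sq t),
    integral_add gradient gammaSum, integral_finsetSum _ fun k _ => gamma k]

theorem integral_smoothRad_weight_hessian_sq_le (hh : CompactContDiff 3 h) (ht : 0 ≤ t) :
    ∫ x : Sp, jb (t - smoothRad x) ^ 2 *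
        ∑ i : Fin 3, ∑ j : Fin 3, pd i.succ (pd j.succ h) (Fin.cons t x) ^ 2 ≤
      1853 * ∫ x, ksDensity h t x := by
  have hh2 := hh.contDiff.of_le (m := 2) (by norm_num)
  have density := (hh.of_le (Nat.le_succ 2)).integrable_ksDensity t
  have laplacian (x : Sp) : jb (t - smoothRad x) ^ 2 *
      (∑ j : Fin 3, pd j.succ (pd j.succ h) (Fin.cons t x)) ^ 2 ≤ 615 * ksDensity h t x := by
    nlinarith [jb_sq_mul_laplacian_sq_le x hh2 ht, mul_le_mul_of_nonneg_right
      (jb_sub_smoothRad_sq_le (t := t) x)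
      (sq_nonneg (∑ j : Fin 3, pd j.succ (pd j.succ h) (Fin.cons t x)))]
  have elliptic := integral_slice_hessian_sq_le hh t
  have lap := integral_mono_of_nonneg (μ := volume) (.of_forall fun x => by positivity)
    (density.const_mul 615) (.of_forall laplacian)
  have grad := integral_mono_of_nonneg (μ := volume) (.of_forall fun x => by positivity)
    density (.of_forall (sum_pd_sq_le_ksDensity h t))
  rw [integral_const_mul] at lap
  refine elliptic.trans ?_
  change 3 * (∫ x : Sp, jb (t - smoothRad x) ^ 2 *
    (∑ j : Fin 3, pd j.succ (pd j.succ h) (Fin.cons t x)) ^ 2) +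
    8 * (∫ x : Sp, ∑ j : Fin 3, pd j.succ h (Fin.cons t x) ^ 2) ≤ _
  linarith

theorem integral_jb_sq_mul_hessian_sq_le (hh : CompactContDiff 3 h) (ht : 0 ≤ t) :
    ∫ x : Sp, jb (t - rad x) ^ 2 *
        ∑ j : Fin 3, ∑ a : Fin 4, pd j.succ (pd a h) (Fin.cons t x) ^ 2 ≤
      6400 * ∫ x, ksDensity h t x := by
  have hh2 := hh.contDiff.of_le (m := 2) (by norm_num)
  have density := (hh.of_le (Nat.le_succ 2)).integrable_ksDensity t
  have hessian : Integrable fun x : Sp => jb (t - smoothRad x) ^ 2 *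
      ∑ i : Fin 3, ∑ j : Fin 3, pd i.succ (pd j.succ h) (Fin.cons t x) ^ 2 := by
    have weight := (contDiff_jb_sub_sq (contDiff_smoothRad (ι := Fin 3) (n := 0)) t).continuous
    simp only [Finset.mul_sum]
    exact integrable_finsetSum _ fun i _ => integrable_finsetSum _ fun j _ =>
      ((hh.pd j.succ).pd i.succ).integrable_mul_slice_sq weight t
  have nonneg : 0 ≤ ∫ x, ksDensity h t x := integral_nonneg (ksDensity_nonneg h t)
  have total := integral_mono_of_nonneg (μ := volume) (.of_forall fun x => by positivity)
    ((density.const_mul 246).fun_add (hessian.const_mul 3))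
    (.of_forall fun x => jb_sq_mul_hessian_sq_le x hh2 ht)
  rw [integral_add (density.const_mul 246) (hessian.const_mul 3), integral_const_mul,
    integral_const_mul] at total
  linarith [integral_smoothRad_weight_hessian_sq_le hh ht]

end Integration

section Norms

theorem sqrt_add_le_add_sqrt (a b : ℝ) : √(a + b) ≤ √a + √b := by
  rcases le_total 0 a with ha | ha
  · rcases le_total 0 b with hb | hb
    · refine Real.sqrt_le_iff.2 ⟨by positivity, ?_⟩
      rw [add_sq, Real.sq_sqrt ha, Real.sq_sqrt hb]
      linarith [mul_nonneg (Real.sqrt_nonneg a) (Real.sqrt_nonneg b)]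
    · exact (Real.sqrt_le_sqrt (by linarith)).trans (le_add_of_nonneg_right (Real.sqrt_nonneg b))
  · exact (Real.sqrt_le_sqrt (by linarith)).trans (le_add_of_nonneg_left (Real.sqrt_nonneg a))

theorem sqrt_sum_le_sum_sqrt {ι : Type*} (s : Finset ι) (f : ι → ℝ) :
    √(∑ i ∈ s, f i) ≤ ∑ i ∈ s, √(f i) :=
  Finset.le_sum_of_subadditive _ Real.sqrt_zero.le sqrt_add_le_add_sqrt s f

theorem sum_range_two_sum_fin_fun {κ R : Type*} [Fintype κ] [AddCommMonoid R]
    (f : ∀ m : ℕ, (Fin m → κ) → R) :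
    ∑ m ∈ range 2, ∑ α : Fin m → κ, f m α = f 0 ![] + ∑ k, f 1 ![k] := by
  have singletons : ∑ α : Fin 1 → κ, f 1 α = ∑ k, f 1 ![k] :=
    Fintype.sum_equiv (Equiv.funUnique (Fin 1) κ) _ _ fun α => congrArg (f 1) <| by
      ext i
      rw [Fin.fin_one_eq_zero i]
      rfl
  rw [Finset.sum_range_succ, Finset.sum_range_one, singletons, Fintype.sum_unique (f 0),
    Subsingleton.elim default ![]]

end Norms

theorem stmt_9_general {h : Pt → ℝ} (hh : ContDiff ℝ 3 h) (hc : HasCompactSupport h) {t : ℝ}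
    (ht : 0 ≤ t) :
    (∫ x : Sp, jb (t - rad x) ^ 2 *
        ∑ j : Fin 3, ∑ a : Fin 4, (pd j.succ (pd a h) (Fin.cons t x)) ^ 2) ^ ((1:ℝ)/2)
      ≤ 80 * ∑ m ∈ Finset.range 2, ∑ α : Fin m → Fin 8,
          (∫ x : Sp, ∑ a, (GamComp α (pd a h) (Fin.cons t x)) ^ 2) ^ ((1:ℝ)/2)
        + 80 * (∫ x : Sp,
            jb (t + rad x) ^ 2 * (box1 h (Fin.cons t x)) ^ 2) ^ ((1:ℝ)/2) := by
  have cc : CompactContDiff 3 h := ⟨hh, hc⟩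
  simp only [← Real.sqrt_eq_rpow, sum_range_two_sum_fin_fun]
  calc _ ≤ √(80 ^ 2 * ∫ x, ksDensity h t x) :=
        Real.sqrt_le_sqrt ((integral_jb_sq_mul_hessian_sq_le cc ht).trans_eq (by norm_num))
    _ = 80 * √(∫ x, ksDensity h t x) := by
        rw [Real.sqrt_mul (by positivity), Real.sqrt_sq (by norm_num)]
    _ ≤ 80 * (√(∫ x : Sp, ∑ a, pd a h (Fin.cons t x) ^ 2)
          + ∑ k, √(∫ x : Sp, ∑ a, Gam k (pd a h) (Fin.cons t x) ^ 2)
          + √(∫ x : Sp, jb (t + rad x) ^ 2 * box1 h (Fin.cons t x) ^ 2)) := by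
        rw [integral_ksDensity (cc.of_le (Nat.le_succ 2))]
        gcongr
        exact (sqrt_add_le_add_sqrt _ _).trans (add_le_add_left
          ((sqrt_add_le_add_sqrt _ _).trans (add_le_add_right (sqrt_sum_le_sum_sqrt _ _) _)) _)
    _ = _ := mul_add _ _ _

/-- inequality (3.3) of the paper.  For `h ∈ C₀^∞(ℝ₊×ℝ³)` and `t ≥ 0`,
`‖⟨t-r⟩∇_x ∂h(t,·)‖₂ ≤ C Σ_{|α|≤1}‖Γ^α h'(t,·)‖₂ + C‖⟨t+r⟩□h(t,·)‖₂`. -/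
theorem stmt_9 :
    ∃ C : ℝ, 0 < C ∧
      ∀ (h : Pt → ℝ), ContDiff ℝ (⊤ : ℕ∞) h → HasCompactSupport h →
        (∀ X : Pt, X 0 < 0 → h X = 0) →
        ∀ t : ℝ, 0 ≤ t →
          (∫ x : Sp, jb (t - rad x) ^ 2 *
              ∑ j : Fin 3, ∑ a : Fin 4, (pd j.succ (pd a h) (Fin.cons t x)) ^ 2) ^ ((1:ℝ)/2)
            ≤ C * ∑ m ∈ Finset.range 2, ∑ α : Fin m → Fin 8,
                (∫ x : Sp, ∑ a, (GamComp α (pd a h) (Fin.cons t x)) ^ 2) ^ ((1:ℝ)/2)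
              + C * (∫ x : Sp,
                  jb (t + rad x) ^ 2 * (box1 h (Fin.cons t x)) ^ 2) ^ ((1:ℝ)/2) := by
  exact ⟨80, by norm_num, fun h hh hc _ t ht =>
    stmt_9_general (hh.of_le (by norm_cast)) hc ht⟩
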